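/- Suppose M̃_{ℓ..m} is an α-SV-approximation of the doubly stochastic matrix M_{ℓ..m} and M̃_{m..r} is a β-SV-approximation of the doubly stochastic matrix M_{m..r}. Then for all x, y ∈ ℝ^w: xᵀ·M_{ℓ..m}·(M̃_{m..r} − M_{m..r})·y + xᵀ·(M̃_{ℓ..m} − M_{ℓ..m})·M_{m..r}·y ≤ max(α,β) · (D(M_{ℓ..r}, y) + D(M_{ℓ..r}ᵀ, x))/2, where M_{ℓ..r} = M_{ℓ..m}·M_{m..r}. -/

import Mathlib

open Matrix Finset

variable {w : ℕ}

/-- `A` is doubly stochastic: nonnegative entries, all row and column sums equal `1`. -/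
def IsDoublyStochastic (A : Matrix (Fin w) (Fin w) ℝ) : Prop :=
  (∀ i j, 0 ≤ A i j) ∧ (∀ i, ∑ j, A i j = 1) ∧ (∀ j, ∑ i, A i j = 1)

/-- `D(A,y) = ‖y‖₂² − ‖Ay‖₂²`. -/
noncomputable def Dfun (A : Matrix (Fin w) (Fin w) ℝ) (y : Fin w → ℝ) : ℝ :=
  (∑ i, y i ^ 2) - ∑ i, (A *ᵥ y) i ^ 2

/-- `W̃` is a `δ`-SV-approximation of `W` (averaged form). -/
def IsSVApprox (δ : ℝ) (W Wt : Matrix (Fin w) (Fin w) ℝ) : Prop :=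
  ∀ x y : Fin w → ℝ,
    |x ⬝ᵥ ((Wt - W) *ᵥ y)| ≤ δ * ((Dfun Wᵀ x + Dfun W y) / 2)

/-!
Moving `Mlm` onto `x`, the first term is `(Mlmᵀ x)ᵀ (Tmr - Mmr) y`, so the two SV hypotheses bound
the two terms by `β (D(Mmrᵀ, Mlmᵀ x) + D(Mmr, y)) / 2` and `α (D(Mlmᵀ, x) + D(Mlm, Mmr y)) / 2`.
A doubly stochastic matrix is a contraction in `ℓ²` (`Dfun_nonneg`), so `D ≥ 0` and both `α` and `β`
may be replaced by their maximum. The four `D` terms then telescope in pairs by the chain rule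
`D(B, y) + D(A, B y) = D(A B, y)` (`Dfun_mul`), applied to `Mlm * Mmr` and to its transpose.
-/

theorem IsDoublyStochastic.transpose {A : Matrix (Fin w) (Fin w) ℝ}
    (hA : IsDoublyStochastic A) : IsDoublyStochastic Aᵀ :=
  ⟨fun i j => hA.1 j i, hA.2.2, hA.2.1⟩

/-- Jensen's inequality along each row (row sums are `1`) gives `(A y)ᵢ² ≤ ∑ⱼ Aᵢⱼ yⱼ²`; summing over
`i` and using that the column sums are `1` gives `‖A y‖² ≤ ‖y‖²`. -/
theorem Dfun_nonneg {A : Matrix (Fin w) (Fin w) ℝ} (hA : IsDoublyStochastic A)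
    (y : Fin w → ℝ) : 0 ≤ Dfun A y := by
  have key : ∑ i, (A *ᵥ y) i ^ 2 ≤ ∑ i, y i ^ 2 :=
    calc ∑ i, (A *ᵥ y) i ^ 2 ≤ ∑ i, ∑ j, A i j * y j ^ 2 :=
          Finset.sum_le_sum fun i _ =>
            Real.pow_arith_mean_le_arith_mean_pow_of_even Finset.univ (A i) y
              (fun j _ => hA.1 i j) (hA.2.1 i) even_two
      _ = ∑ j, ∑ i, A i j * y j ^ 2 := Finset.sum_comm
      _ = ∑ j, y j ^ 2 :=
          Finset.sum_congr rfl fun j _ => by rw [← Finset.sum_mul, hA.2.2 j, one_mul]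
  exact sub_nonneg.mpr key

/-- The chain rule for `D`. -/
theorem Dfun_mul (A B : Matrix (Fin w) (Fin w) ℝ) (y : Fin w → ℝ) :
    Dfun (A * B) y = Dfun B y + Dfun A (B *ᵥ y) := by
  simp only [Dfun, Matrix.mulVec_mulVec]
  ring

/-- The last two error terms of the recursion combine: if `M̃_{ℓ..m}` is an
`α`-SV-approximation of `M_{ℓ..m}` and `M̃_{m..r}` a `β`-SV-approximation of `M_{m..r}`,
then `xᵀ M_{ℓ..m}(M̃_{m..r} − M_{m..r})y + xᵀ(M̃_{ℓ..m} − M_{ℓ..m})M_{m..r} y`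
is at most `max(α,β) (D(M_{ℓ..r},y) + D(M_{ℓ..r}ᵀ,x))/2` where `M_{ℓ..r} = M_{ℓ..m} M_{m..r}`. -/
theorem stmt_6 (Mlm Mmr Tlm Tmr : Matrix (Fin w) (Fin w) ℝ) (α β : ℝ)
    (hα : 0 ≤ α) (hβ : 0 ≤ β)
    (hlm : IsDoublyStochastic Mlm) (hmr : IsDoublyStochastic Mmr)
    (hA : IsSVApprox α Mlm Tlm) (hB : IsSVApprox β Mmr Tmr)
    (x y : Fin w → ℝ) :
    x ⬝ᵥ (Mlm *ᵥ ((Tmr - Mmr) *ᵥ y)) + x ⬝ᵥ ((Tlm - Mlm) *ᵥ (Mmr *ᵥ y)) ≤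
      max α β * ((Dfun (Mlm * Mmr) y + Dfun (Mlm * Mmr)ᵀ x) / 2) := by
  have h1 := (le_abs_self _).trans (hB (Mlmᵀ *ᵥ x) y)
  have h2 := (le_abs_self _).trans (hA x (Mmr *ᵥ y))
  have e : x ⬝ᵥ (Mlm *ᵥ ((Tmr - Mmr) *ᵥ y)) = (Mlmᵀ *ᵥ x) ⬝ᵥ ((Tmr - Mmr) *ᵥ y) := by
    rw [Matrix.dotProduct_mulVec, Matrix.mulVec_transpose]
  have h3 : 0 ≤ (Dfun Mmrᵀ (Mlmᵀ *ᵥ x) + Dfun Mmr y) / 2 :=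
    div_nonneg (add_nonneg (Dfun_nonneg hmr.transpose _) (Dfun_nonneg hmr _)) zero_le_two
  have h4 : 0 ≤ (Dfun Mlmᵀ x + Dfun Mlm (Mmr *ᵥ y)) / 2 :=
    div_nonneg (add_nonneg (Dfun_nonneg hlm.transpose _) (Dfun_nonneg hlm _)) zero_le_two
  have h5 := mul_le_mul_of_nonneg_right (le_max_right α β) h3
  have h6 := mul_le_mul_of_nonneg_right (le_max_left α β) h4
  rw [e, Matrix.transpose_mul, Dfun_mul, Dfun_mul]
  linarith
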